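/- Let X ⊆ ℝⁿ and U ⊆ ℝᵐ be compact, β > 0, and suppose V* : ℝⁿ → ℝ is continuously differentiable and satisfies the Bellman inequality l(x,u) − βV*(x) + ∇V*(x)·f(x,u) ≥ 0 on X×U. Let V̂ be any real polynomial of degree at most d, and set a := (1 + ‖f‖_{C⁰(X×U)}/β) · ‖V̂ − V*‖_{C¹(X)}. Then the polynomial Ṽ := V̂ − a (of degree at most d) satisfies the Bellman inequality l − βṼ + ∇Ṽ·f ≥ 0 on X×U, and moreover ‖Ṽ − V*‖_{C¹(X)} ≤ ‖V̂ − V*‖_{C¹(X)} · (2 + ‖f‖_{C⁰(X×U)}/β). -/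

import Mathlib

open RealInnerProductSpace

/-- `‖h‖_{C⁰(K)}`: supremum of `|h|` over `K` (the maximum, for `K` compact and `h` continuous). -/
noncomputable def supNormC0 {E : Type*} (K : Set E) (h : E → ℝ) : ℝ :=
  sSup ((fun z => |h z|) '' K)

/-- `‖f‖_{C⁰(K)}` for vector-valued `f`: supremum of `‖f‖` over `K`. -/
noncomputable def supNormC0Vec {E F : Type*} [Norm F] (K : Set E) (f : E → F) : ℝ :=
  sSup ((fun z => ‖f z‖) '' K)

/-- `‖h‖_{C¹(K)} := max_{z∈K}|h(z)| + max_{z∈K}‖∇h(z)‖₂`. -/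
noncomputable def supNormC1 {n : ℕ} (K : Set (EuclideanSpace ℝ (Fin n)))
    (h : EuclideanSpace ℝ (Fin n) → ℝ) : ℝ :=
  supNormC0 K h + supNormC0Vec K (fun z => gradient h z)

/-!
Subtracting the constant `a` leaves the gradient unchanged and raises the Bellman expression by
`β * a`. Replacing `V*` by `V̂` lowers it by at most `β |V̂ - V*| + ‖∇(V̂ - V*)‖ ‖f‖`, and this is
at most `(β + ‖f‖_{C⁰}) ‖V̂ - V*‖_{C¹} = β * a`. The `C¹` norm of the error grows by at most `|a|`,
because only its `C⁰` part sees the shift.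
-/

section Gradient

variable {𝕜 E : Type*} [RCLike 𝕜] [NormedAddCommGroup E] [InnerProductSpace 𝕜 E] [CompleteSpace E]

theorem gradient_fun_sub {g h : E → 𝕜} {x : E} (hg : DifferentiableAt 𝕜 g x)
    (hh : DifferentiableAt 𝕜 h x) :
    gradient (fun y => g y - h y) x = gradient g x - gradient h x := by
  simp only [gradient, fderiv_fun_sub hg hh, map_sub]

theorem gradient_sub_const (h : E → 𝕜) (c : 𝕜) (x : E) :
    gradient (fun y => h y - c) x = gradient h x := by
  simp only [gradient, fderiv_sub_const]

theorem continuous_gradient_of_contDiff {h : E → 𝕜} (hh : ContDiff 𝕜 1 h) :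
    Continuous (gradient h) :=
  (LinearIsometryEquiv.continuous _).comp (hh.continuous_fderiv one_ne_zero)

end Gradient

theorem contDiff_eval_mvPolynomial {𝕜 E R σ : Type*} [NontriviallyNormedField 𝕜]
    [NormedAddCommGroup E] [NormedSpace 𝕜 E] [NormedCommRing R] [NormedAlgebra 𝕜 R]
    {k : WithTop ℕ∞} {f : E → σ → R} (hf : ∀ i, ContDiff 𝕜 k fun x => f x i)
    (p : MvPolynomial σ R) : ContDiff 𝕜 k fun x => MvPolynomial.eval (f x) p := by
  induction p using MvPolynomial.induction_on with
  | C c => simpa only [MvPolynomial.eval_C] using contDiff_const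
  | add p q hp hq => simpa only [map_add] using hp.add hq
  | mul_X p i hp => simpa only [map_mul, MvPolynomial.eval_X] using hp.mul (hf i)

section SupNorm

theorem norm_le_supNormC0Vec {E F : Type*} [Norm F] {K : Set E} {h : E → F}
    (hbdd : BddAbove ((fun z => ‖h z‖) '' K)) {z : E} (hz : z ∈ K) : ‖h z‖ ≤ supNormC0Vec K h :=
  le_csSup hbdd (Set.mem_image_of_mem _ hz)

theorem supNormC0Vec_nonneg {E F : Type*} [SeminormedAddGroup F] (K : Set E) (h : E → F) :
    0 ≤ supNormC0Vec K h :=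
  Real.sSup_nonneg (Set.forall_mem_image.2 fun _ _ => norm_nonneg _)

theorem abs_le_supNormC0 {E : Type*} {K : Set E} {h : E → ℝ}
    (hbdd : BddAbove ((fun z => |h z|) '' K)) {z : E} (hz : z ∈ K) : |h z| ≤ supNormC0 K h :=
  le_csSup hbdd (Set.mem_image_of_mem _ hz)

theorem supNormC0_nonneg {E : Type*} (K : Set E) (h : E → ℝ) : 0 ≤ supNormC0 K h :=
  Real.sSup_nonneg (Set.forall_mem_image.2 fun _ _ => abs_nonneg _)

theorem supNormC0_sub_const_le {E : Type*} {K : Set E} {h : E → ℝ}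
    (hbdd : BddAbove ((fun z => |h z|) '' K)) (c : ℝ) :
    supNormC0 K (fun z => h z - c) ≤ supNormC0 K h + |c| := by
  refine Real.sSup_le (Set.forall_mem_image.2 fun z hz => ?_)
    (add_nonneg (supNormC0_nonneg K h) (abs_nonneg c))
  calc |h z - c| ≤ |h z| + |c| := abs_sub _ _
    _ ≤ supNormC0 K h + |c| := by gcongr; exact abs_le_supNormC0 hbdd hz

end SupNorm

section Bellman

variable {E ι : Type*} [NormedAddCommGroup E] [InnerProductSpace ℝ E] [CompleteSpace E]

/-- The `C¹` norm of `h` on a subset `K` of a real Hilbert space, with suprema in place of maxima.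
On `EuclideanSpace ℝ (Fin n)` it is definitionally equal to `supNormC1`. -/
noncomputable def hilbertSupNormC1 (K : Set E) (h : E → ℝ) : ℝ :=
  supNormC0 K h + supNormC0Vec K (gradient h)

theorem hilbertSupNormC1_nonneg (K : Set E) (h : E → ℝ) : 0 ≤ hilbertSupNormC1 K h :=
  add_nonneg (supNormC0_nonneg K h) (supNormC0Vec_nonneg K _)

theorem hilbertSupNormC1_sub_const_le {K : Set E} {h : E → ℝ}
    (hbdd : BddAbove ((fun z => |h z|) '' K)) (c : ℝ) :
    hilbertSupNormC1 K (fun z => h z - c) ≤ hilbertSupNormC1 K h + |c| := by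
  have hgrad : gradient (fun z => h z - c) = gradient h := funext (gradient_sub_const h c)
  rw [hilbertSupNormC1, hilbertSupNormC1, hgrad, add_right_comm]
  gcongr
  exact supNormC0_sub_const_le hbdd c

/-- The Bellman inequality `l - βV + ∇V · f ≥ 0` on `X × U`, for states in a real Hilbert space and
controls in an arbitrary type. -/
def BellmanInequality (β : ℝ) (l : E → ι → ℝ) (f : E → ι → E) (X : Set E) (U : Set ι)
    (V : E → ℝ) : Prop :=
  ∀ x ∈ X, ∀ u ∈ U, 0 ≤ l x u - β * V x + ⟪gradient V x, f x u⟫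

variable {β : ℝ} {l : E → ι → ℝ} {f : E → ι → E} {X : Set E} {U : Set ι} {V W : E → ℝ}

theorem BellmanInequality.sub_const_of_le (hV : BellmanInequality β l f X U V) (hβ : 0 ≤ β)
    (hVdiff : ∀ x ∈ X, DifferentiableAt ℝ V x) (hWdiff : ∀ x ∈ X, DifferentiableAt ℝ W x)
    {A B F a : ℝ} (hA : ∀ x ∈ X, W x - V x ≤ A)
    (hB : ∀ x ∈ X, ‖gradient (fun y => W y - V y) x‖ ≤ B)
    (hF : ∀ x ∈ X, ∀ u ∈ U, ‖f x u‖ ≤ F) (ha : β * A + B * F ≤ β * a) :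
    BellmanInequality β l f X U fun x => W x - a := by
  intro x hx u hu
  have hvalue : β * (W x - V x) ≤ β * A := mul_le_mul_of_nonneg_left (hA x hx) hβ
  have hinner : -(B * F) ≤ ⟪gradient (fun y => W y - V y) x, f x u⟫ :=
    (abs_le.1 ((abs_real_inner_le_norm _ _).trans (mul_le_mul (hB x hx) (hF x hx u hu)
      (norm_nonneg _) ((norm_nonneg _).trans (hB x hx))))).1
  rw [gradient_sub_const]
  calc 0 ≤ (l x u - β * V x + ⟪gradient V x, f x u⟫) +
        (β * a - β * (W x - V x) + ⟪gradient (fun y => W y - V y) x, f x u⟫) :=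
        add_nonneg (hV x hx u hu) (by linarith)
    _ = l x u - β * (W x - a) + ⟪gradient W x, f x u⟫ := by
        rw [gradient_fun_sub (hWdiff x hx) (hVdiff x hx), inner_sub_left]
        ring

theorem bellman_approx_shift_general (hβ : 0 < β)
    (hVdiff : ∀ x ∈ X, DifferentiableAt ℝ V x) (hWdiff : ∀ x ∈ X, DifferentiableAt ℝ W x)
    (hvalue : BddAbove ((fun z => |W z - V z|) '' X))
    (hgrad : BddAbove ((fun z => ‖gradient (fun y => W y - V y) z‖) '' X))
    (hf : BddAbove ((fun q : E × ι => ‖f q.1 q.2‖) '' X ×ˢ U))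
    (hV : BellmanInequality β l f X U V) {a : ℝ}
    (ha : a = (1 + supNormC0Vec (X ×ˢ U) (fun q => f q.1 q.2) / β) *
      hilbertSupNormC1 X (fun z => W z - V z)) :
    BellmanInequality β l f X U (fun x => W x - a) ∧
    hilbertSupNormC1 X (fun z => W z - a - V z) ≤
      hilbertSupNormC1 X (fun z => W z - V z) *
        (2 + supNormC0Vec (X ×ˢ U) (fun q => f q.1 q.2) / β) := by
  have hF : 0 ≤ supNormC0Vec (X ×ˢ U) (fun q => f q.1 q.2) := supNormC0Vec_nonneg _ _
  have hN := hilbertSupNormC1_nonneg X fun z => W z - V z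
  constructor
  · refine hV.sub_const_of_le hβ.le hVdiff hWdiff
      (fun x hx => (le_abs_self _).trans (abs_le_supNormC0 hvalue hx))
      (fun x hx => norm_le_supNormC0Vec hgrad hx)
      (fun x hx u hu => norm_le_supNormC0Vec hf (Set.mk_mem_prod hx hu)) ?_
    set A := supNormC0 X fun z => W z - V z
    set B := supNormC0Vec X (gradient fun z => W z - V z)
    set F := supNormC0Vec (X ×ˢ U) fun q => f q.1 q.2
    have hA : 0 ≤ A := supNormC0_nonneg _ _
    have hB : 0 ≤ B := supNormC0Vec_nonneg _ _
    calc β * A + B * F ≤ β * (A + B) + (A + B) * F := by gcongr <;> linarith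
      _ = β * ((1 + F / β) * (A + B)) := by field_simp
      _ = β * a := by rw [ha, hilbertSupNormC1]
  · have ha_nonneg : 0 ≤ a := by rw [ha]; positivity
    simp only [sub_right_comm _ a]
    calc hilbertSupNormC1 X (fun z => W z - V z - a)
        ≤ hilbertSupNormC1 X (fun z => W z - V z) + |a| := hilbertSupNormC1_sub_const_le hvalue a
      _ = _ := by rw [abs_of_nonneg ha_nonneg, ha]; ring

end Bellman

/-- Let `X, U` be compact, `β > 0`, and `V*` a `C¹` function satisfying the Bellman
inequality on `X × U`. For a polynomial `V̂` of degree at most `d`, set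
`a := (1 + ‖f‖_{C⁰(X×U)}/β) · ‖V̂ − V*‖_{C¹(X)}`. Then `Ṽ := V̂ − a` (a polynomial of degree at
most `d`) satisfies the Bellman inequality on `X × U`, and
`‖Ṽ − V*‖_{C¹(X)} ≤ ‖V̂ − V*‖_{C¹(X)} · (2 + ‖f‖_{C⁰(X×U)}/β)`. -/
theorem bellman_approx_shift (n m d : ℕ) (β : ℝ) (hβ : 0 < β)
    (X : Set (EuclideanSpace ℝ (Fin n))) (U : Set (EuclideanSpace ℝ (Fin m)))
    (hX : IsCompact X) (hU : IsCompact U)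
    (l : EuclideanSpace ℝ (Fin n) → EuclideanSpace ℝ (Fin m) → ℝ)
    (f : EuclideanSpace ℝ (Fin n) → EuclideanSpace ℝ (Fin m) → EuclideanSpace ℝ (Fin n))
    (hl : Continuous fun p : EuclideanSpace ℝ (Fin n) × EuclideanSpace ℝ (Fin m) => l p.1 p.2)
    (hf : Continuous fun p : EuclideanSpace ℝ (Fin n) × EuclideanSpace ℝ (Fin m) => f p.1 p.2)
    (Vstar : EuclideanSpace ℝ (Fin n) → ℝ) (hVstar : ContDiff ℝ 1 Vstar)
    (hbell : ∀ x ∈ X, ∀ u ∈ U, 0 ≤ l x u - β * Vstar x + ⟪gradient Vstar x, f x u⟫)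
    (Vhat : MvPolynomial (Fin n) ℝ) (hdeg : Vhat.totalDegree ≤ d)
    (a : ℝ)
    (ha : a = (1 + supNormC0Vec (X ×ˢ U) (fun q => f q.1 q.2) / β) *
      supNormC1 X (fun z : EuclideanSpace ℝ (Fin n) => MvPolynomial.eval z Vhat - Vstar z)) :
    (Vhat - MvPolynomial.C a).totalDegree ≤ d ∧
    (∀ x ∈ X, ∀ u ∈ U,
      0 ≤ l x u - β * (MvPolynomial.eval x Vhat - a) +
        ⟪gradient (fun y : EuclideanSpace ℝ (Fin n) => MvPolynomial.eval y Vhat - a) x, f x u⟫) ∧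
    supNormC1 X (fun z : EuclideanSpace ℝ (Fin n) => (MvPolynomial.eval z Vhat - a) - Vstar z) ≤
      supNormC1 X (fun z : EuclideanSpace ℝ (Fin n) => MvPolynomial.eval z Vhat - Vstar z) *
        (2 + supNormC0Vec (X ×ˢ U) (fun q => f q.1 q.2) / β) := by
  have hVhat : ContDiff ℝ 1 fun z : EuclideanSpace ℝ (Fin n) => MvPolynomial.eval z Vhat :=
    contDiff_eval_mvPolynomial (fun _ => by fun_prop) Vhat
  have herr := hVhat.sub hVstar
  exact ⟨(MvPolynomial.totalDegree_sub_C_le _ _).trans hdeg,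
    bellman_approx_shift_general hβ (fun _ _ => hVstar.differentiable one_ne_zero _)
      (fun _ _ => hVhat.differentiable one_ne_zero _)
      (hX.image herr.continuous.abs).bddAbove
      (hX.image (continuous_gradient_of_contDiff herr).norm).bddAbove
      ((hX.prod hU).image hf.norm).bddAbove hbell ha⟩
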